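/- Let L be a ℤ-graded Lie conformal algebra of class 𝒱, with structure polynomials p_{i,j} taken with respect to chosen ℂ[∂]-bases, and suppose deg p_{−1,1}(∂) = 1 and deg p_{0,1}(λ) = 1. Then Supp(L) = ℤ, and the ℂ[∂]-bases {Lᵢ : i ∈ ℤ} can be chosen so that for all m, n ∈ ℤ the structure polynomial satisfies p_{m,n}(∂,λ) − (m∂ + (m+n)λ) ∈ ℂ; that is, the degree-one homogeneous part of p_{m,n} equals m∂ + (m+n)λ. -/

import Mathlib

open scoped BigOperators Classical ENNReal
open Polynomial

noncomputable section

/-- A Lie conformal algebra over `ℂ`, encoded via its `n`-th products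
`a_(n) b` and the operator `∂ = D`.  The `λ`-bracket is
`[a_λ b] = ∑ₙ (λⁿ/n!) • (a_(n) b)`. -/
structure LieConformalAlgebra (L : Type) [AddCommGroup L] [Module ℂ L] : Type where
  D : L →ₗ[ℂ] L
  prd : ℕ → L →ₗ[ℂ] L →ₗ[ℂ] L
  bound : ∀ a b : L, ∃ N : ℕ, ∀ n : ℕ, N ≤ n → prd n a b = 0
  sesq : ∀ (n : ℕ) (a b : L), prd n (D a) b = (-(n : ℂ)) • prd (n - 1) a b
  sesq' : ∀ (n : ℕ) (a b : L),
    prd n a (D b) = D (prd n a b) + (n : ℂ) • prd (n - 1) a b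
  skew : ∀ (n : ℕ) (a b : L),
    prd n a b
      = - ∑ᶠ j : ℕ, ((-1 : ℂ) ^ (n + j) * ((Nat.factorial j : ℂ))⁻¹) • (⇑D)^[j] (prd (n + j) b a)
  jacobi : ∀ (m n : ℕ) (a b c : L),
    prd m a (prd n b c) - prd n b (prd m a c)
      = ∑ j ∈ Finset.range (m + 1), (Nat.choose m j : ℂ) • prd (m + n - j) (prd j a b) c

namespace LieConformalAlgebra

variable {L : Type} [AddCommGroup L] [Module ℂ L]

/-- The action of a polynomial `q(∂) ∈ ℂ[∂]` on an element. -/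
def applyP (C : LieConformalAlgebra L) (q : Polynomial ℂ) (x : L) : L :=
  q.sum fun k c => c • (⇑C.D)^[k] x

/-- `[a_λ b] = p(∂, λ) • t`, where `p ∈ ℂ[∂][λ]` is a two-variable polynomial
(outer variable `λ`, inner variable `∂`). -/
def BracketEq (C : LieConformalAlgebra L) (a b t : L) (p : Polynomial (Polynomial ℂ)) : Prop :=
  ∀ n : ℕ, C.prd n a b = (Nat.factorial n : ℂ) • C.applyP (p.coeff n) t

def IsSubalgebra (C : LieConformalAlgebra L) (N : Submodule ℂ L) : Prop :=
  (∀ x ∈ N, C.D x ∈ N) ∧ ∀ n : ℕ, ∀ a ∈ N, ∀ b ∈ N, C.prd n a b ∈ N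

def IsIdeal (C : LieConformalAlgebra L) (N : Submodule ℂ L) : Prop :=
  (∀ x ∈ N, C.D x ∈ N) ∧ ∀ (n : ℕ) (a : L), ∀ b ∈ N, C.prd n a b ∈ N

/-- `L` is finitely generated as a Lie conformal algebra (finite type). -/
def FiniteType (C : LieConformalAlgebra L) : Prop :=
  ∃ s : Finset L, ∀ N : Submodule ℂ L, C.IsSubalgebra N → (s : Set L) ⊆ (N : Set L) → N = ⊤

/-- `L` is finitely generated as a `ℂ[∂]`-module. -/
def FGPolyModule (C : LieConformalAlgebra L) : Prop :=
  ∃ s : Finset L, ∀ N : Submodule ℂ L, (∀ x ∈ N, C.D x ∈ N) → (s : Set L) ⊆ (N : Set L) → N = ⊤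

/-- Iterated adjoint action `a₁_(k₁)(a₂_(k₂)(⋯ x))`. -/
def iterPrd (C : LieConformalAlgebra L) : List (L × ℕ) → L → L
  | [], x => x
  | (a, k) :: t, x => C.prd k a (iterPrd C t x)

/-- The `ℂ[∂]`-rank of the submodule `N` is at most `r`:
any `r+1` elements of `N` are `ℂ[∂]`-linearly dependent. -/
def polyRankLE (C : LieConformalAlgebra L) (N : Submodule ℂ L) (r : ℕ) : Prop :=
  ∀ v : Fin (r + 1) → L, (∀ k, v k ∈ N) →
    ∃ q : Fin (r + 1) → Polynomial ℂ, (∃ k, q k ≠ 0) ∧ ∑ k, C.applyP (q k) (v k) = 0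

/-- The family `v` is a free `ℂ[∂]`-basis of `L`. -/
def IsFreePolyBasis (C : LieConformalAlgebra L) {ι : Type} (v : ι → L) : Prop :=
  LinearIndependent ℂ (fun q : ι × ℕ => (⇑C.D)^[q.2] (v q.1)) ∧
  Submodule.span ℂ (Set.range fun q : ι × ℕ => (⇑C.D)^[q.2] (v q.1)) = ⊤

/-- `[U_λ V]`: the `ℂ`-span of all `u_(n) v`. -/
def bspan (C : LieConformalAlgebra L) (U V : Set L) : Submodule ℂ L :=
  Submodule.span ℂ {x : L | ∃ (n : ℕ) (u : L) (w : L), u ∈ U ∧ w ∈ V ∧ x = C.prd n u w}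

end LieConformalAlgebra

/-- `∂` as an element of `ℂ[∂][λ]`. -/
def Pd : Polynomial (Polynomial ℂ) := Polynomial.C Polynomial.X
/-- `λ` as an element of `ℂ[∂][λ]`. -/
def Pl : Polynomial (Polynomial ℂ) := Polynomial.X
/-- a constant in `ℂ[∂][λ]`. -/
def Pc (a : ℂ) : Polynomial (Polynomial ℂ) := Polynomial.C (Polynomial.C a)

/-- Total degree of a two-variable polynomial in `ℂ[∂][λ]`. -/
def tdeg (p : Polynomial (Polynomial ℂ)) : ℕ :=
  p.support.sup fun n => n + (p.coeff n).natDegree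

section ModelPolynomials

/-- structure polynomials of `𝒱(s)` -/
def pV (s : ℂ) (i j : ℤ) : Polynomial (Polynomial ℂ) :=
  Pd + Pc 2 * Pl + Pc (s * ((i : ℂ) - (j : ℂ)))

/-- structure polynomials of `CL₁(s)` -/
def pCL1 (s : ℂ) (i j : ℤ) : Polynomial (Polynomial ℂ) :=
  Pc ((i : ℂ) + 1) * Pd + Pc ((i : ℂ) + (j : ℂ) + 2) * Pl + Pc (s * ((i : ℂ) - (j : ℂ)))

/-- structure polynomials of `CL₂(b,s)` -/
def pCL2 (b s : ℂ) (i j : ℤ) : Polynomial (Polynomial ℂ) :=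
  Pc ((i : ℂ) + b) * Pd + Pc ((i : ℂ) + (j : ℂ) + 2 * b) * Pl + Pc (s * ((i : ℂ) - (j : ℂ)))

/-- structure polynomials of `SCL₂(b,s)` (for `2b ∈ ℤ`), w.r.t. the basis
`L'ᵢ = Lᵢ (i ≠ -2b)`, `L'_{-2b} = (∂+2s)L_{-2b}` of the corresponding graded
subalgebra of `CL₂(b,s)`. -/
def pSCL2 (b s : ℂ) (i j : ℤ) : Polynomial (Polynomial ℂ) :=
  (if (i : ℂ) = -(2 * b) then Pc (2 * s) - Pl else 1) *
  (if (j : ℂ) = -(2 * b) then Pd + Pl + Pc (2 * s) else 1) *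
  (if (i : ℂ) + (j : ℂ) = -(2 * b) then Pc ((i : ℂ) + b) else pCL2 b s i j)

/-- structure polynomials of `CL₃(s)` -/
def pCL3 (s : ℂ) (i j : ℤ) : Polynomial (Polynomial ℂ) :=
  if i + j = 0 then Pc (i : ℂ) * (Pd + Pc s)
  else if i = 0 then Pc (-(j : ℂ)) * (Pc (2 * s) - Pl)
  else if j = 0 then Pc (i : ℂ) * (Pd + Pl + Pc (2 * s))
  else Pc (i : ℂ) * Pd + Pc ((i : ℂ) + (j : ℂ)) * Pl + Pc (s * ((i : ℂ) - (j : ℂ)))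

/-- structure polynomials of `ECL(s)` -/
def pECL (s : ℂ) (i j : ℤ) : Polynomial (Polynomial ℂ) :=
  if i + j = 0 then Pc (i : ℂ) * (Pd + Pc s) * (Pd + Pc (2 * s))
  else if i = 0 then Pc (-(j : ℂ))
  else if j = 0 then Pc (i : ℂ)
  else Pc (i : ℂ) * Pd + Pc ((i : ℂ) + (j : ℂ)) * Pl + Pc (s * ((i : ℂ) - (j : ℂ)))

/-- structure polynomials of `M(1)` (indices `≥ -1`, completed by skew-symmetry) -/
def pM1 (i j : ℤ) : Polynomial (Polynomial ℂ) :=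
  if i = 1 ∧ j = 1 then Pd + Pc 2 * Pl
  else if i = -1 ∧ 1 ≤ j then Pc (((j : ℂ) + 1) * ((j : ℂ) - 2) / 2)
  else if j = -1 ∧ 1 ≤ i then Pc (-(((i : ℂ) + 1) * ((i : ℂ) - 2) / 2))
  else if i = 0 then Pc (-(j : ℂ))
  else if j = 0 then Pc (i : ℂ)
  else if i = 1 ∧ 2 ≤ j then 1
  else if j = 1 ∧ 2 ≤ i then -1
  else 0

/-- structure polynomials of `M(2)` (completed by skew-symmetry) -/
def pM2 (i j : ℤ) : Polynomial (Polynomial ℂ) :=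
  if i = 1 ∧ j = 1 then Pd + Pc 2 * Pl
  else if i = -1 ∧ j = -1 then Pd + Pc 2 * Pl
  else if i = 0 then Pc (-(j : ℂ))
  else if j = 0 then Pc (i : ℂ)
  else if i = -1 ∧ 1 ≤ j then Pc (((j : ℂ) + 1) * ((j : ℂ) - 2) / 2)
  else if j = -1 ∧ 1 ≤ i then Pc (-(((i : ℂ) + 1) * ((i : ℂ) - 2) / 2))
  else if i = 1 ∧ j ≤ -2 then Pc (((j : ℂ) - 1) * ((j : ℂ) + 2) / 2)
  else if j = 1 ∧ i ≤ -2 then Pc (-(((i : ℂ) - 1) * ((i : ℂ) + 2) / 2))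
  else if i = -1 ∧ j ≤ -2 then 1
  else if j = -1 ∧ i ≤ -2 then -1
  else if i = 1 ∧ 2 ≤ j then 1
  else if j = 1 ∧ 2 ≤ i then -1
  else 0

end ModelPolynomials

namespace LieConformalAlgebra

variable {L : Type} [AddCommGroup L] [Module ℂ L]

/-- `C` is isomorphic to the Virasoro Lie conformal algebra. -/
def IsVir (C : LieConformalAlgebra L) : Prop :=
  ∃ e : L, C.IsFreePolyBasis (fun _ : Unit => e) ∧ C.BracketEq e e e (Pd + Pc 2 * Pl)

/-- `C` is isomorphic to the loop Virasoro Lie conformal algebra `𝒱(s)`. -/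
def IsV (C : LieConformalAlgebra L) (s : ℂ) : Prop :=
  ∃ v : ℤ → L, C.IsFreePolyBasis v ∧
    ∀ i j : ℤ, C.BracketEq (v i) (v j) (v (i + j)) (pV s i j)

/-- `C` is isomorphic to `CL₁(s)`. -/
def IsCL1 (C : LieConformalAlgebra L) (s : ℂ) : Prop :=
  ∃ v : ℤ → L, C.IsFreePolyBasis (fun q : {i : ℤ // -1 ≤ i} => v q.1) ∧
    ∀ i j : ℤ, -1 ≤ i → -1 ≤ j →
      C.BracketEq (v i) (v j) (if -1 ≤ i + j then v (i + j) else 0) (pCL1 s i j)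

/-- `C` is isomorphic to `CL₂(b,s)`. -/
def IsCL2 (C : LieConformalAlgebra L) (b s : ℂ) : Prop :=
  ∃ v : ℤ → L, C.IsFreePolyBasis v ∧
    ∀ i j : ℤ, C.BracketEq (v i) (v j) (v (i + j)) (pCL2 b s i j)

/-- `C` is isomorphic to `SCL₂(b,s)`. -/
def IsSCL2 (C : LieConformalAlgebra L) (b s : ℂ) : Prop :=
  ∃ v : ℤ → L, C.IsFreePolyBasis v ∧
    ∀ i j : ℤ, C.BracketEq (v i) (v j) (v (i + j)) (pSCL2 b s i j)

/-- `C` is isomorphic to `CL₃(s)`. -/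
def IsCL3 (C : LieConformalAlgebra L) (s : ℂ) : Prop :=
  ∃ v : ℤ → L, C.IsFreePolyBasis v ∧
    ∀ i j : ℤ, C.BracketEq (v i) (v j) (v (i + j)) (pCL3 s i j)

/-- `C` is isomorphic to `ECL(s)`. -/
def IsECL (C : LieConformalAlgebra L) (s : ℂ) : Prop :=
  ∃ v : ℤ → L, C.IsFreePolyBasis v ∧
    ∀ i j : ℤ, C.BracketEq (v i) (v j) (v (i + j)) (pECL s i j)

/-- `C` is isomorphic to `M(1)`. -/
def IsM1 (C : LieConformalAlgebra L) : Prop :=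
  ∃ v : ℤ → L, C.IsFreePolyBasis (fun q : {i : ℤ // -1 ≤ i} => v q.1) ∧
    ∀ i j : ℤ, -1 ≤ i → -1 ≤ j →
      C.BracketEq (v i) (v j) (if -1 ≤ i + j then v (i + j) else 0) (pM1 i j)

/-- `C` is isomorphic to `M(2)`. -/
def IsM2 (C : LieConformalAlgebra L) : Prop :=
  ∃ v : ℤ → L, C.IsFreePolyBasis v ∧
    ∀ i j : ℤ, C.BracketEq (v i) (v j) (v (i + j)) (pM2 i j)

/-- `C` is isomorphic to the current Lie conformal algebra `Cur 𝔤`. -/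
def IsCur (C : LieConformalAlgebra L) (g : Type) [LieRing g] [LieAlgebra ℂ g] : Prop :=
  ∃ φ : g →ₗ[ℂ] L,
    Function.Bijective (fun f : ℕ →₀ g => f.sum fun k x => (⇑C.D)^[k] (φ x)) ∧
    (∀ x y : g, C.prd 0 (φ x) (φ y) = φ ⁅x, y⁆) ∧
    ∀ n : ℕ, 1 ≤ n → ∀ x y : g, C.prd n (φ x) (φ y) = 0

/-- `C ≅ Cur sl(2,ℂ)`. -/
def IsCurSl2 (C : LieConformalAlgebra L) : Prop :=
  C.IsCur ↥(LieAlgebra.SpecialLinear.sl (Fin 2) ℂ)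

/-- `C ≅ Cur 𝒲`, `𝒲` the Witt algebra (basis `wᵢ`, `[wᵢ,wⱼ] = (j-i)w_{i+j}`). -/
def IsCurWitt (C : LieConformalAlgebra L) : Prop :=
  ∃ v : ℤ → L, C.IsFreePolyBasis v ∧
    (∀ i j : ℤ, C.prd 0 (v i) (v j) = (((j : ℂ) - (i : ℂ))) • v (i + j)) ∧
    ∀ n : ℕ, 1 ≤ n → ∀ i j : ℤ, C.prd n (v i) (v j) = 0

/-- `C ≅ Cur 𝒲₁`, `𝒲₁` spanned by the `wᵢ`, `i ≥ -1`. -/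
def IsCurWitt1 (C : LieConformalAlgebra L) : Prop :=
  ∃ v : ℤ → L, C.IsFreePolyBasis (fun q : {i : ℤ // -1 ≤ i} => v q.1) ∧
    (∀ i j : ℤ, -1 ≤ i → -1 ≤ j →
      C.prd 0 (v i) (v j) = (((j : ℂ) - (i : ℂ))) • (if -1 ≤ i + j then v (i + j) else 0)) ∧
    ∀ n : ℕ, 1 ≤ n → ∀ i j : ℤ, -1 ≤ i → -1 ≤ j → C.prd n (v i) (v j) = 0

end LieConformalAlgebra

/-- A `ℤ`-graded Lie conformal algebra. -/
structure GradedLCA (L : Type) [AddCommGroup L] [Module ℂ L]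
    extends LieConformalAlgebra L where
  G : ℤ → Submodule ℂ L
  internal : DirectSum.IsInternal G
  dGrade : ∀ i : ℤ, ∀ x ∈ G i, D x ∈ G i
  prdGrade : ∀ (i j : ℤ) (n : ℕ), ∀ a ∈ G i, ∀ b ∈ G j, prd n a b ∈ G (i + j)

namespace GradedLCA

variable {L : Type} [AddCommGroup L] [Module ℂ L]

/-- A graded ideal: an ideal generated by homogeneous elements. -/
def IsGradedIdeal (C : GradedLCA L) (N : Submodule ℂ L) : Prop :=
  C.toLieConformalAlgebra.IsIdeal N ∧ (⨆ i : ℤ, N ⊓ C.G i) = N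

/-- `L` is simple graded: nonzero bracket, and the only graded ideals are `⊥` and `⊤`. -/
def IsSimpleGraded (C : GradedLCA L) : Prop :=
  (∃ (n : ℕ) (a b : L), C.prd n a b ≠ 0) ∧
  ∀ N : Submodule ℂ L, C.IsGradedIdeal N → N = ⊥ ∨ N = ⊤

/-- `[L_λ L] = L`. -/
def Perfect (C : GradedLCA L) : Prop :=
  Submodule.span ℂ {x : L | ∃ (n : ℕ) (a b : L), x = C.prd n a b} = ⊤

/-- Each component `L_i` is a nilpotent `L₀`-module under the adjoint action. -/
def Rootless (C : GradedLCA L) : Prop :=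
  ∀ i : ℤ, ∃ n : ℕ, 1 ≤ n ∧ ∀ l : List (L × ℕ), l.length = n →
    (∀ q ∈ l, q.1 ∈ C.G 0) → ∀ x ∈ C.G i, C.toLieConformalAlgebra.iterPrd l x = 0

/-- The ranks of the components are uniformly bounded. -/
def UniformlyBounded (C : GradedLCA L) : Prop :=
  ∃ N : ℕ, 1 ≤ N ∧ ∀ i : ℤ, C.toLieConformalAlgebra.polyRankLE (C.G i) N

end GradedLCA

/-- A module over a Lie conformal algebra, encoded via the `n`-th actions. -/
structure LCAModule {L : Type} [AddCommGroup L] [Module ℂ L] (C : LieConformalAlgebra L)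
    (M : Type) [AddCommGroup M] [Module ℂ M] : Type where
  DM : M →ₗ[ℂ] M
  act : ℕ → L →ₗ[ℂ] M →ₗ[ℂ] M
  bound : ∀ (a : L) (m : M), ∃ N : ℕ, ∀ n : ℕ, N ≤ n → act n a m = 0
  sesq : ∀ (n : ℕ) (a : L) (m : M), act n (C.D a) m = (-(n : ℂ)) • act (n - 1) a m
  sesq' : ∀ (n : ℕ) (a : L) (m : M),
    act n a (DM m) = DM (act n a m) + (n : ℂ) • act (n - 1) a m
  comm : ∀ (p q : ℕ) (a b : L) (m : M),
    act p a (act q b m) - act q b (act p a m)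
      = ∑ j ∈ Finset.range (p + 1), (Nat.choose p j : ℂ) • act (p + q - j) (C.prd j a b) m

namespace LCAModule

variable {L : Type} [AddCommGroup L] [Module ℂ L] {C : LieConformalAlgebra L}
variable {M : Type} [AddCommGroup M] [Module ℂ M]

/-- Iterated action `a₁_(k₁)(a₂_(k₂)(⋯ m))`. -/
def iterAct (ρ : LCAModule C M) : List (L × ℕ) → M → M
  | [], m => m
  | (a, k) :: t, m => ρ.act k a (iterAct ρ t m)

/-- `N` is an `L`-submodule of `M`. -/
def IsSub (ρ : LCAModule C M) (N : Submodule ℂ M) : Prop :=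
  (∀ m ∈ N, ρ.DM m ∈ N) ∧ ∀ (n : ℕ) (a : L), ∀ m ∈ N, ρ.act n a m ∈ N

/-- `M` is a nilpotent module. -/
def Nilpotent (ρ : LCAModule C M) : Prop :=
  ∃ n : ℕ, 1 ≤ n ∧ ∀ l : List (L × ℕ), l.length = n → ∀ m : M, ρ.iterAct l m = 0

/-- `M` is finitely generated as an `L`-module. -/
def FG (ρ : LCAModule C M) : Prop :=
  ∃ s : Finset M, ∀ N : Submodule ℂ M, ρ.IsSub N → (s : Set M) ⊆ (N : Set M) → N = ⊤

/-- The `L`-submodule `N` is finitely generated as an `L`-module. -/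
def FGIn (ρ : LCAModule C M) (N : Submodule ℂ M) : Prop :=
  ∃ s : Finset M, (s : Set M) ⊆ (N : Set M) ∧
    ∀ P : Submodule ℂ M, ρ.IsSub P → (s : Set M) ⊆ (P : Set M) → N ≤ P

/-- `M` is finitely generated as a `ℂ[∂]`-module. -/
def FGPoly (ρ : LCAModule C M) : Prop :=
  ∃ s : Finset M, ∀ N : Submodule ℂ M, (∀ m ∈ N, ρ.DM m ∈ N) → (s : Set M) ⊆ (N : Set M) → N = ⊤

end LCAModule

/-- A family is `ℂ[∂]`-linearly independent. -/
def polyIndep {M : Type} [AddCommGroup M] [Module ℂ M] (DM : M →ₗ[ℂ] M)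
    {r : ℕ} (v : Fin r → M) : Prop :=
  ∀ q : Fin r → Polynomial ℂ,
    (∑ k, (q k).sum fun t c => c • (⇑DM)^[t] (v k)) = 0 → ∀ k, q k = 0

/-- The `ℂ[∂]`-rank of a submodule, in `ℕ∞`. -/
def polyRank {M : Type} [AddCommGroup M] [Module ℂ M] (DM : M →ₗ[ℂ] M)
    (N : Submodule ℂ M) : ℕ∞ :=
  ⨆ r ∈ {r : ℕ | ∃ v : Fin r → M, (∀ k, v k ∈ N) ∧ polyIndep DM v}, (r : ℕ∞)

/-- A graded module over a `ℤ`-graded Lie conformal algebra. -/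
structure GradedLCAModule {L : Type} [AddCommGroup L] [Module ℂ L] (C : GradedLCA L)
    (M : Type) [AddCommGroup M] [Module ℂ M]
    extends LCAModule C.toLieConformalAlgebra M where
  GM : ℤ → Submodule ℂ M
  internal : DirectSum.IsInternal GM
  dGrade : ∀ i : ℤ, ∀ m ∈ GM i, DM m ∈ GM i
  actGrade : ∀ (i j : ℤ) (n : ℕ), ∀ a ∈ C.G i, ∀ m ∈ GM j, act n a m ∈ GM (i + j)

namespace GradedLCAModule

variable {L : Type} [AddCommGroup L] [Module ℂ L] {C : GradedLCA L}
variable {M : Type} [AddCommGroup M] [Module ℂ M]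

/-- `Mⁿ = ⊕_{|i| ≤ n} M_i`. -/
def seg (ρ : GradedLCAModule C M) (n : ℕ) : Submodule ℂ M :=
  ⨆ i : ℤ, ⨆ _ : |i| ≤ (n : ℤ), ρ.GM i

/-- `e(M) = liminf (1/n) rank_{ℂ[∂]} Mⁿ`. -/
def eM (ρ : GradedLCAModule C M) : ℝ≥0∞ :=
  Filter.atTop.liminf fun n : ℕ => (polyRank ρ.DM (ρ.seg n) : ℝ≥0∞) / (n : ℝ≥0∞)

/-- Each `M_i` is a nilpotent `L₀`-module. -/
def Weightless (ρ : GradedLCAModule C M) : Prop :=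
  ∀ i : ℤ, ∃ n : ℕ, 1 ≤ n ∧ ∀ l : List (L × ℕ), l.length = n →
    (∀ q ∈ l, q.1 ∈ C.G 0) → ∀ m ∈ ρ.GM i, ρ.toLCAModule.iterAct l m = 0

/-- The submodule `I(M)` generated by all homogeneous `v` lying in the span of
the iterated actions of `L` on `v`. -/
def IM (ρ : GradedLCAModule C M) : Submodule ℂ M :=
  sInf {N : Submodule ℂ M | ρ.toLCAModule.IsSub N ∧
    {v : M | (∃ i : ℤ, v ∈ ρ.GM i) ∧
      v ∈ Submodule.span ℂ
        {w : M | ∃ l : List (L × ℕ), 1 ≤ l.length ∧ w = ρ.toLCAModule.iterAct l v}} ⊆ N}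

end GradedLCAModule

/-- The structure context for graded Lie conformal algebras all of whose
nonzero components are free of rank one over `ℂ[∂]`: fixed homogeneous bases
`bas i` and structure polynomials `sp i j ∈ ℂ[∂][λ]`, with `0 ∈ Supp(L)` and
`L₀` abelian. -/
structure RankOneContext (L : Type) [AddCommGroup L] [Module ℂ L]
    extends GradedLCA L where
  bas : ℤ → L
  sp : ℤ → ℤ → Polynomial (Polynomial ℂ)
  bas_mem : ∀ i : ℤ, bas i ∈ G i
  bas_zero : ∀ i : ℤ, G i = ⊥ → bas i = 0
  bas_indep : ∀ i : ℤ, G i ≠ ⊥ → LinearIndependent ℂ fun k : ℕ => (⇑D)^[k] (bas i)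
  bas_span : ∀ i : ℤ, G i ≠ ⊥ →
    G i = Submodule.span ℂ (Set.range fun k : ℕ => (⇑D)^[k] (bas i))
  sp_brkt : ∀ (i j : ℤ) (n : ℕ),
    prd n (bas i) (bas j)
      = (Nat.factorial n : ℂ) • (((sp i j).coeff n).sum fun k c => c • (⇑D)^[k] (bas (i + j)))
  sp_zero : ∀ i j : ℤ, (G i = ⊥ ∨ G j = ⊥ ∨ G (i + j) = ⊥) → sp i j = 0
  supp_zero : G 0 ≠ ⊥
  abelian0 : ∀ n : ℕ, ∀ x ∈ G 0, ∀ y ∈ G 0, prd n x y = 0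

/-- A Lie conformal algebra of class `𝒱`. -/
structure ClassV (L : Type) [AddCommGroup L] [Module ℂ L]
    extends RankOneContext L where
  supp_one : G 1 ≠ ⊥
  supp_negone : G (-1) ≠ ⊥
  genV : ∀ N : Submodule ℂ L, (∀ x ∈ N, D x ∈ N) →
    (∀ n : ℕ, ∀ a ∈ N, ∀ b ∈ N, prd n a b ∈ N) →
    G 1 ≤ N → G 0 ≤ N → G (-1) ≤ N → N = ⊤
  ne_m11 : sp (-1) 1 ≠ 0
  ne_01 : sp 0 1 ≠ 0

/-! ### Polynomial functions of two variables -/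

theorem aux_evalEval_zero (p : ℂ[X][X]) (h : ∀ x y, p.evalEval x y = 0) : p = 0 := by
  apply Polynomial.eq_of_infinite_eval_eq
  apply Set.Infinite.mono (s := Set.range (fun y : ℂ => (Polynomial.C y : ℂ[X])))
  · rintro _ ⟨y, rfl⟩
    show eval (C y) p = eval (C y) 0
    rw [eval_zero]
    apply Polynomial.funext
    intro x
    simpa [evalEval] using h x y
  · exact Set.infinite_range_of_injective Polynomial.C_injective

def P2 (f : ℂ → ℂ → ℂ) : Prop := ∃ p : ℂ[X][X], ∀ x y, f x y = p.evalEval x y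

namespace P2

theorem const (c : ℂ) : P2 (fun _ _ => c) := ⟨C (C c), by simp⟩
theorem fst : P2 (fun x _ => x) := ⟨C X, by simp [evalEval]⟩
theorem snd : P2 (fun _ y => y) := ⟨X, by simp [evalEval]⟩
theorem add {f g : ℂ → ℂ → ℂ} (hf : P2 f) (hg : P2 g) : P2 (fun x y => f x y + g x y) := by
  obtain ⟨p, hp⟩ := hf
  obtain ⟨q, hq⟩ := hg
  exact ⟨p + q, fun x y => by beta_reduce; rw [hp, hq, evalEval_add]⟩
theorem mul {f g : ℂ → ℂ → ℂ} (hf : P2 f) (hg : P2 g) : P2 (fun x y => f x y * g x y) := by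
  obtain ⟨p, hp⟩ := hf
  obtain ⟨q, hq⟩ := hg
  exact ⟨p * q, fun x y => by beta_reduce; rw [hp, hq, evalEval_mul]⟩
theorem neg {f : ℂ → ℂ → ℂ} (hf : P2 f) : P2 (fun x y => - f x y) := by
  obtain ⟨p, hp⟩ := hf
  exact ⟨-p, fun x y => by beta_reduce; rw [hp, evalEval_neg]⟩
theorem sub {f g : ℂ → ℂ → ℂ} (hf : P2 f) (hg : P2 g) : P2 (fun x y => f x y - g x y) := by
  obtain ⟨p, hp⟩ := hf
  obtain ⟨q, hq⟩ := hg
  exact ⟨p - q, fun x y => by beta_reduce; rw [hp, hq, evalEval_sub]⟩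

theorem comp {f u v : ℂ → ℂ → ℂ} (hf : P2 f) (hu : P2 u) (hv : P2 v) :
    P2 (fun x y => f (u x y) (v x y)) := by
  obtain ⟨p, hp⟩ := hf
  obtain ⟨U, hU⟩ := hu
  obtain ⟨V, hV⟩ := hv
  refine ⟨eval₂ (eval₂RingHom (C.comp C) U) V p, fun x y => ?_⟩
  beta_reduce
  rw [hp, hU, hV, ← coe_evalEvalRingHom x y, hom_eval₂, coe_evalEvalRingHom, ← eval₂_evalRingHom]
  congr 1
  ext
  · simp
  · simp

theorem eq_zero_or {f g : ℂ → ℂ → ℂ} (hf : P2 f) (hg : P2 g)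
    (h : ∀ x y, f x y * g x y = 0) : (∀ x y, f x y = 0) ∨ (∀ x y, g x y = 0) := by
  obtain ⟨p, hp⟩ := hf
  obtain ⟨q, hq⟩ := hg
  have : p * q = 0 := aux_evalEval_zero _ fun x y => by rw [evalEval_mul, ← hp, ← hq, h]
  rcases mul_eq_zero.1 this with h | h
  · left; intro x y; rw [hp, h, evalEval_zero]
  · right; intro x y; rw [hq, h, evalEval_zero]

end P2

/-- a polynomial `g(x)` with `(g(x) - g(0))` additive is affine -/
theorem aux_additive (g : ℂ → ℂ) (hg : P2 (fun x _ => g x))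
    (h : ∀ x y, g (x + y) + g 0 = g x + g y) : ∀ x, g x = (g 1 - g 0) * x + g 0 := by
  obtain ⟨p, hp⟩ := (hg.sub ((P2.const (g 1 - g 0)).mul P2.fst)).sub (P2.const (g 0))
  set q : ℂ[X] := p.eval (C 0) with hq
  have hpq : ∀ x, g x - (g 1 - g 0) * x - g 0 = q.eval x := fun x => by
    simpa [evalEval, hq] using hp x 0
  have hn : ∀ n : ℕ, q.eval (n : ℂ) = 0 := by
    intro n
    rw [← hpq]
    induction n with
    | zero => simp
    | succ k ih => push_cast; linear_combination ih + h k 1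
  have : q = 0 := by
    apply Polynomial.eq_of_infinite_eval_eq
    apply Set.Infinite.mono (s := Set.range (fun n : ℕ => (n : ℂ)))
    · rintro _ ⟨n, rfl⟩
      simp [hn]
    · exact Set.infinite_range_of_injective Nat.cast_injective
  intro x
  have := hpq x
  rw [‹q = 0›, eval_zero] at this
  linear_combination this

/-- `p_{0,k}` does not depend on `∂`. -/
theorem aux_indep (f : ℂ → ℂ → ℂ) (hf : P2 f)
    (h : ∀ x l m, f (x + l) m * f x l = f (x + m) l * f x m) : ∀ x l, f x l = f 0 l := by
  by_cases hz : ∀ x l, f x l = 0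
  · intro x l; rw [hz, hz]
  -- no `x0` with `f x0 · = 0`
  have h1 : ∀ x0, ¬ ∀ m, f x0 m = 0 := by
    intro x0 h0
    have := P2.eq_zero_or (f := fun l m => f (x0 - l + m) l) (g := fun l m => f (x0 - l) m)
      (hf.comp (((P2.const x0).sub P2.fst).add P2.snd) P2.fst)
      (hf.comp ((P2.const x0).sub P2.fst) P2.snd) (fun l m => by
        rw [← h, sub_add_cancel, h0, zero_mul])
    apply hz
    rcases this with h | h
    · intro x l
      have := h l (x - x0 + l)
      rwa [show x0 - l + (x - x0 + l) = x by ring] at this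
    · intro x l
      have := h (x0 - x) l
      rwa [show x0 - (x0 - x) = x by ring] at this
  have h2 : ∀ x0 l, f x0 l = 0 → ∀ x, f x l = 0 := by
    intro x0 l h0
    have := P2.eq_zero_or (f := fun m _ => f (x0 + m) l) (g := fun m _ => f x0 m)
      (hf.comp ((P2.const x0).add P2.fst) (P2.const l))
      (hf.comp (P2.const x0) P2.fst) (fun m _ => by
        rw [← h, h0, mul_zero])
    rcases this with h | h
    · intro x
      have := h (x - x0) 0
      rwa [show x0 + (x - x0) = x by ring] at this
    · exact absurd (fun m => h m 0) (h1 x0)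
  intro x l
  obtain ⟨p, hp⟩ := hf
  by_cases hd : 0 < (p.eval (C l)).degree
  · obtain ⟨z, hz⟩ := Complex.exists_root hd
    have : f z l = 0 := by rw [hp]; exact hz
    rw [h2 z l this, h2 z l this]
  · rw [hp, hp, evalEval, evalEval, eq_C_of_degree_le_zero (not_lt.1 hd)]
    simp

/-- leading coefficients. -/
theorem aux_lead (f : ℂ → ℂ → ℂ) (hf : P2 f) (hz : ¬ ∀ x y, f x y = 0) (l A B D : ℂ)
    (h : ∀ x m, A * f (x + l) m = B * f x (l + m) + D * f x m) : A = B + D := by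
  obtain ⟨p, hp⟩ := hf
  have hp0 : p ≠ 0 := by
    rintro rfl
    exact hz fun x y => by rw [hp, evalEval_zero]
  have key : C (C A) * p.map (compRingHom (X + C l)) = C (C B) * p.comp (X + C (C l)) + C (C D) * p := by
    rw [← sub_eq_zero]
    apply aux_evalEval_zero
    intro x m
    have := h x m
    simp only [hp] at this
    rw [evalEval_sub, evalEval_add, evalEval_mul, evalEval_mul, evalEval_mul, sub_eq_zero]
    have e1 : evalEval x m (p.map (compRingHom (X + C l))) = evalEval (x + l) m p := by
      rw [← eval₂_evalRingHom, ← eval₂_evalRingHom, eval₂_map]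
      congr 1
      ext <;> simp
    have e2 : evalEval x m (p.comp (X + C (C l))) = evalEval x (l + m) p := by
      simp [evalEval, eval_comp, add_comm]
    rw [e1, e2]
    simpa [evalEval] using this
  have hc := congrArg (fun q => (q.coeff p.natDegree).leadingCoeff) key
  have e3 : (p.comp (X + C (C l))).coeff p.natDegree = p.leadingCoeff := by
    have h1 : (p.comp (X + C (C l))).natDegree = p.natDegree := by
      rw [natDegree_comp, natDegree_X_add_C, mul_one]
    have := leadingCoeff_comp (p := p) (q := X + C (C l)) (by rw [natDegree_X_add_C]; simp)
    rw [leadingCoeff, h1] at this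
    rw [this]; simp
  simp only [coeff_C_mul, coeff_add, coeff_map, e3] at hc
  have hl : p.coeff p.natDegree ≠ 0 := leadingCoeff_ne_zero.2 hp0
  rw [show p.leadingCoeff = p.coeff p.natDegree from rfl, ← add_mul, ← C_add] at hc
  rw [leadingCoeff_mul, leadingCoeff_mul, leadingCoeff_C, leadingCoeff_C] at hc
  rw [coe_compRingHom_apply, leadingCoeff_comp (by rw [natDegree_X_add_C]; simp)] at hc
  rw [leadingCoeff_X_add_C, one_pow, mul_one] at hc
  exact mul_right_cancel₀ (leadingCoeff_ne_zero.2 hl) hc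

theorem aux_quad {a b c : ℂ} (h : ∀ x : ℂ, a * x ^ 2 + b * x + c = 0) : a = 0 := by
  have h0 := h 0
  have h1 := h 1
  have h2 := h (-1)
  linear_combination (1 / 2 : ℂ) * h1 + (1 / 2 : ℂ) * h2 - h0

/-! ### Abstract analysis of the structure polynomials, as functions -/

structure AbsF (F : ℤ → ℤ → ℂ → ℂ → ℂ) : Prop where
  poly : ∀ i j, P2 (F i j)
  jac : ∀ i j k x l m, F j k (x + l) m * F i (j + k) x l
      = F i j (-l - m) l * F (i + j) k x (l + m) + F i k (x + m) l * F j (i + k) x m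
  skew : ∀ i j x l, F i j x l = - F j i x (-l - x)

theorem absF_phi {F : ℤ → ℤ → ℂ → ℂ → ℂ} (h : AbsF F) (h00 : ∀ x l, F 0 0 x l = 0) (k : ℤ)
    (x l : ℂ) : F 0 k x l = F 0 k 0 l := by
  apply aux_indep _ (h.poly 0 k)
  intro x l m
  have := h.jac 0 0 k x l m
  simpa [h00] using this

theorem absF_star {F : ℤ → ℤ → ℂ → ℂ → ℂ} (h : AbsF F) (h00 : ∀ x l, F 0 0 x l = 0) (j k : ℤ)
    (x l m : ℂ) : F 0 (j + k) 0 l * F j k (x + l) m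
      = F 0 j 0 l * F j k x (l + m) + F 0 k 0 l * F j k x m := by
  have := h.jac 0 j k x l m
  rw [zero_add, zero_add, absF_phi h h00 j, absF_phi h h00 (j + k), absF_phi h h00 k] at this
  linear_combination this

theorem absF_add {F : ℤ → ℤ → ℂ → ℂ → ℂ} (h : AbsF F) (h00 : ∀ x l, F 0 0 x l = 0) (j k : ℤ)
    (hne : ¬ ∀ x l, F j k x l = 0) (l : ℂ) : F 0 (j + k) 0 l = F 0 j 0 l + F 0 k 0 l := by
  apply aux_lead _ (h.poly j k) hne l
  intro x m
  exact absF_star h h00 j k x l m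

/-- The equation satisfied by every `p_{j,k}`. -/
def Eq2 (F : ℤ → ℤ → ℂ → ℂ → ℂ) : Prop := ∀ (j k : ℤ) (x l m : ℂ),
  ((j : ℂ) + k) * F j k (x + l) m = j * F j k x (l + m) + k * F j k x m

theorem absF_eq2 {F : ℤ → ℤ → ℂ → ℂ → ℂ} (h : AbsF F) (h00 : ∀ x l, F 0 0 x l = 0)
    {c d : ℂ} (hc : c ≠ 0) (S : ℤ → Prop)
    (hphi : ∀ k, S k → ∀ l, F 0 k 0 l = k * (c * l + d))
    (hS : ∀ i j, (¬ S i ∨ ¬ S j ∨ ¬ S (i + j)) → ∀ x l, F i j x l = 0) : Eq2 F := by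
  intro j k x l m
  by_cases hs : ¬ S j ∨ ¬ S k ∨ ¬ S (j + k)
  · simp [hS j k hs]
  push Not at hs
  obtain ⟨h1, h2, h3⟩ := hs
  have key := P2.eq_zero_or (f := fun l _ => c * l + d)
    (g := fun l _ => ((j : ℂ) + k) * F j k (x + l) m - (j * F j k x (l + m) + k * F j k x m))
    (((P2.const c).mul P2.fst).add (P2.const d))
    (((P2.const _).mul ((h.poly j k).comp ((P2.const x).add P2.fst) (P2.const m))).sub
      (((P2.const _).mul ((h.poly j k).comp (P2.const x) (P2.fst.add (P2.const m)))).add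
      (P2.const _))) (by
      intro l _
      have := absF_star h h00 j k x l m
      rw [hphi _ h1, hphi _ h2, hphi _ h3] at this
      push_cast at this
      linear_combination this)
  rcases key with h | h
  · exfalso
    apply hc
    linear_combination h 1 0 - h 0 0
  · linear_combination h l 0

theorem absF_generic {F : ℤ → ℤ → ℂ → ℂ → ℂ} (h : AbsF F) (h2 : Eq2 F) {j k : ℤ}
    (hj : j ≠ 0) (hk : k ≠ 0) (hjk : j + k ≠ 0) :
    ∃ A B : ℂ, ∀ x l, F j k x l = A * (j * x + (j + k) * l) + B := by
  have hj' : (j : ℂ) ≠ 0 := by exact_mod_cast hj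
  have hk' : (k : ℂ) ≠ 0 := by exact_mod_cast hk
  have hjk' : (j : ℂ) + k ≠ 0 := by exact_mod_cast hjk
  have e1 : ∀ x m, F j k x m = (j * F j k 0 (x + m) + k * F j k 0 m) / (j + k) := by
    intro x m
    have := h2 j k 0 x m
    rw [zero_add] at this
    rw [eq_div_iff hjk']
    linear_combination this
  have e2 := aux_additive (fun y => F j k 0 y) ((h.poly j k).comp (P2.const 0) P2.fst) (by
    intro x y
    have := h2 j k x y 0
    rw [e1 (x + y), e1 x (y + 0), e1 x 0] at this
    field_simp at this
    simp only [add_zero] at this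
    have h3 : (j * k : ℂ) * (F j k 0 (x + y) + F j k 0 0 - (F j k 0 x + F j k 0 y)) = 0 := by
      linear_combination this
    have := (mul_eq_zero.1 h3).resolve_left (mul_ne_zero hj' hk')
    linear_combination this)
  refine ⟨(F j k 0 1 - F j k 0 0) / (j + k), F j k 0 0, fun x m => ?_⟩
  have e3 := e2 (x + m)
  have e4 := e2 m
  beta_reduce at e3 e4
  rw [e1, e3, e4]
  field_simp
  ring

theorem absF_one {F : ℤ → ℤ → ℂ → ℂ → ℂ} (h : AbsF F) (h2 : Eq2 F)
    {a b c d : ℂ} (h01 : ∀ x l, F 0 1 x l = c * l + d) (hm : ∀ x l, F (-1) 1 x l = a * x + b)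
    (k : ℤ) : ∃ A B : ℂ, ∀ x l, F 1 k x l = A * (x + (1 + k) * l) + B := by
  rcases eq_or_ne k 0 with rfl | hk
  · exact ⟨c, -d, fun x l => by rw [h.skew, h01]; push_cast; ring⟩
  rcases eq_or_ne (1 + k) 0 with hk1 | hk1
  · obtain rfl : k = -1 := by omega
    exact ⟨-a, -b, fun x l => by rw [h.skew, hm]; push_cast; ring⟩
  obtain ⟨A, B, hAB⟩ := absF_generic h h2 one_ne_zero hk hk1
  exact ⟨A, B, fun x l => by rw [hAB]; push_cast; ring⟩

theorem absF_neg_one {F : ℤ → ℤ → ℂ → ℂ → ℂ} (h : AbsF F) (h2 : Eq2 F)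
    {a b c d : ℂ} (h01 : ∀ x l, F 0 (-1) x l = -(c * l + d)) (hm : ∀ x l, F (-1) 1 x l = a * x + b)
    (k : ℤ) : ∃ A B : ℂ, ∀ x l, F (-1) k x l = A * (-x + (-1 + k) * l) + B := by
  rcases eq_or_ne k 0 with rfl | hk
  · exact ⟨c, d, fun x l => by rw [h.skew, h01]; push_cast; ring⟩
  rcases eq_or_ne (-1 + k) 0 with hk1 | hk1
  · obtain rfl : k = 1 := by omega
    exact ⟨-a, b, fun x l => by rw [hm]; push_cast; ring⟩
  obtain ⟨A, B, hAB⟩ := absF_generic h h2 (by norm_num) hk hk1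
  exact ⟨A, B, fun x l => by rw [hAB]; push_cast; ring⟩

theorem absF_scale (A : ℤ → ℂ) (hA : ∀ k, A k ≠ 0) :
    ∃ s : ℤ → ℂ, (∀ k, s k ≠ 0) ∧ s 1 = 1 ∧ ∀ k, s (k + 1) = s k * A k := by
  let up : ℕ → ℂ := fun n => Nat.rec 1 (fun n r => r * A n) n
  let down : ℕ → ℂ := fun n => Nat.rec (1 / A (-1)) (fun n r => r / A (Int.negSucc (n + 1))) n
  let t : ℤ → ℂ := fun k => match k with
    | Int.ofNat n => up n
    | Int.negSucc n => down n
  have hup : ∀ n, up n ≠ 0 := by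
    intro n
    induction n with
    | zero => exact one_ne_zero
    | succ n ih => exact mul_ne_zero ih (hA _)
  have hdown : ∀ n, down n ≠ 0 := by
    intro n
    induction n with
    | zero => exact div_ne_zero one_ne_zero (hA _)
    | succ n ih => exact div_ne_zero ih (hA _)
  have ht : ∀ k, t k ≠ 0 := by
    rintro (n | n)
    · exact hup n
    · exact hdown n
  have hstep : ∀ k, t (k + 1) = t k * A k := by
    rintro (n | n)
    · rfl
    · rcases n with _ | n
      · show (1 : ℂ) = (1 / A (-1)) * A (-1)
        rw [one_div, inv_mul_cancel₀ (hA _)]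
      · show down n = down n / A (Int.negSucc (n + 1)) * A (Int.negSucc (n + 1))
        rw [div_mul_cancel₀ _ (hA _)]
  have ht1 : t 1 ≠ 0 := ht 1
  refine ⟨fun k => t k / t 1, fun k => div_ne_zero (ht _) ht1, div_self ht1, fun k => ?_⟩
  beta_reduce
  rw [hstep]; ring

/-- normalised case -/
theorem absF_norm {F : ℤ → ℤ → ℂ → ℂ → ℂ} (h : AbsF F) (h2 : Eq2 F)
    {d : ℂ} (h0 : ∀ (k : ℤ) x l, F 0 k x l = k * (l + d))
    (h1 : ∀ k : ℤ, ∃ B : ℂ, ∀ x l, F 1 k x l = x + (1 + k) * l + B) (m n : ℤ) :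
    ∃ B : ℂ, ∀ x l, F m n x l = m * x + (m + n) * l + B := by
  choose β hβ using h1
  have hn0 : ∀ m : ℤ, ∀ x l, F m 0 x l = m * (x + l) - m * d := by
    intro m x l
    rw [h.skew, h0]; ring
  have R : ∀ m n : ℤ, m + n ≠ 0 → ∃ A B : ℂ, ∀ x l, F m n x l = A * (m * x + (m + n) * l) + B := by
    intro m n hmn
    rcases eq_or_ne m 0 with rfl | hm
    · exact ⟨1, n * d, fun x l => by rw [h0]; push_cast; ring⟩
    rcases eq_or_ne n 0 with rfl | hn
    · exact ⟨1, - m * d, fun x l => by rw [hn0]; push_cast; ring⟩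
    exact absF_generic h h2 hm hn hmn
  let Q : ℤ → ℤ → Prop := fun m n => ∃ B : ℂ, ∀ x l, F m n x l = m * x + (m + n) * l + B
  have Q0 : ∀ m, Q m 0 := fun m => ⟨- m * d, fun x l => by rw [hn0]; push_cast; ring⟩
  have step : ∀ m n : ℤ, m ≠ 0 → m + n ≠ 0 → m + n + 1 ≠ 0 → (Q m n ↔ Q m (n + 1)) := by
    intro m n hm hmn hmn1
    have hm' : (m : ℂ) ≠ 0 := by exact_mod_cast hm
    obtain ⟨A, B, hA⟩ := R m n hmn
    obtain ⟨A', B', hA'⟩ := R m (n + 1) (by omega)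
    obtain ⟨A'', B'', hA''⟩ := R (m + 1) n (by omega)
    have hAA : A * m - A' * m = 0 := by
      apply aux_quad (a := A * m - A' * m)
        (b := A * m * β (m + n) + B - β m * A'' * (m + 1) - β n * A' * m - B')
        (c := B * β (m + n) - β m * B'' - β n * B')
      intro x
      have := h.jac 1 m n x 0 0
      rw [add_comm 1 m, add_comm 1 n, hβ, hβ, hβ, hA, hA', hA''] at this
      push_cast at this
      linear_combination this
    have hAA' : A = A' := by
      apply mul_right_cancel₀ hm'
      linear_combination hAA
    subst hAA'
    have hA1 : ∀ (m n : ℤ) (A B : ℂ), m ≠ 0 → (∀ x l, F m n x l = A * (m * x + (m + n) * l) + B) →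
        (Q m n ↔ A = 1) := by
      intro m n A B hm hA
      have hm' : (m : ℂ) ≠ 0 := by exact_mod_cast hm
      constructor
      · rintro ⟨C, hC⟩
        have e1 := hC 1 0
        have e0 := hC 0 0
        rw [hA] at e1 e0
        apply mul_right_cancel₀ hm'
        linear_combination e1 - e0
      · rintro rfl
        exact ⟨B, fun x l => by rw [hA]; ring⟩
    rw [hA1 m n A B hm hA, hA1 m (n + 1) A B' hm hA']
  have hpos : ∀ m : ℤ, 0 < m → ∀ n : ℤ, 0 < m + n → Q m n := by
    intro m hm n hn
    rcases le_total 0 n with h0 | h0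
    · induction n, h0 using Int.leInduction with
      | base => exact Q0 m
      | succ n hn' ih => exact (step m n (by omega) (by omega) (by omega)).1 (ih (by omega))
    · induction n, h0 using Int.leInductionDown with
      | base => exact Q0 m
      | pred n hn' ih =>
        refine (step m (n - 1) (by omega) (by omega) (by omega)).2 ?_
        rw [sub_add_cancel]
        exact ih (by omega)
  have hneg : ∀ m : ℤ, m < 0 → ∀ n : ℤ, m + n < 0 → Q m n := by
    intro m hm n hn
    rcases le_total 0 n with h0 | h0
    · induction n, h0 using Int.leInduction with
      | base => exact Q0 m
      | succ n hn' ih => exact (step m n (by omega) (by omega) (by omega)).1 (ih (by omega))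
    · induction n, h0 using Int.leInductionDown with
      | base => exact Q0 m
      | pred n hn' ih =>
        refine (step m (n - 1) (by omega) (by omega) (by omega)).2 ?_
        rw [sub_add_cancel]
        exact ih (by omega)
  have hsk : ∀ m n, Q m n → Q n m := by
    rintro m n ⟨B, hB⟩
    exact ⟨-B, fun x l => by rw [h.skew, hB]; ring⟩
  have hall : ∀ m n : ℤ, m + n ≠ 0 → Q m n := by
    intro m n hmn
    rcases lt_or_gt_of_ne hmn with hlt | hgt
    · by_cases hm : m < 0
      · exact hneg m hm n hlt
      · exact hsk _ _ (hneg n (by omega) m (by omega))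
    · by_cases hm : 0 < m
      · exact hpos m hm n hgt
      · exact hsk _ _ (hpos n (by omega) m (by omega))
  by_cases hmn : m + n ≠ 0
  · exact hall m n hmn
  push Not at hmn
  obtain rfl : n = -m := by omega
  rcases eq_or_ne m 0 with rfl | hm
  · exact Q0 0
  have hm' : (m : ℂ) ≠ 0 := by exact_mod_cast hm
  have hg : ∀ x l, F m (-m) x l = F m (-m) x 0 := by
    intro x l
    have := h2 m (-m) x l 0
    push_cast at this
    rw [add_zero] at this
    apply mul_left_cancel₀ hm'
    linear_combination -this
  obtain ⟨B1, hB1⟩ := hall (m + 1) (-m) (by omega)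
  obtain ⟨B2, hB2⟩ := hall m (-m + 1) (by omega)
  have hj : ∀ x, F m (-m) x 0 * (x - d) = β m * ((m + 1) * x + B1) + (x + β (-m)) * (m * x + B2) := by
    intro x
    have := h.jac 1 m (-m) x 0 0
    rw [add_neg_cancel, add_comm 1 m, add_comm 1 (-m), hβ m, hβ (-m), hn0 1, hB1, hB2] at this
    push_cast at this
    rw [add_zero x] at this
    linear_combination this
  have hj0 := hj d
  obtain ⟨w, hw⟩ : ∃ w, w = B2 + β m * (m + 1) + β (-m) * m + m * d := ⟨_, rfl⟩
  have key := P2.eq_zero_or (f := fun x _ => F m (-m) x 0 - (m * x + w)) (g := fun x _ => x - d)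
    (((h.poly m (-m)).comp P2.fst (P2.const 0)).sub (((P2.const _).mul P2.fst).add (P2.const w)))
    (P2.fst.sub (P2.const d)) (by
      intro x _
      rw [hw]
      linear_combination hj x - hj0)
  rcases key with hk | hk
  · refine ⟨w, fun x l => ?_⟩
    rw [hg]
    push_cast
    linear_combination hk x 0
  · exfalso
    have := hk (d + 1) 0
    norm_num at this

theorem absF_main {F : ℤ → ℤ → ℂ → ℂ → ℂ} (h : AbsF F) (h00 : ∀ x l, F 0 0 x l = 0)
    {a b c d : ℂ} (ha : a ≠ 0) (hc : c ≠ 0)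
    (h01 : ∀ x l, F 0 1 x l = c * l + d) (hm : ∀ x l, F (-1) 1 x l = a * x + b)
    (S : ℤ → Prop) (hS : ∀ i j, (¬ S i ∨ ¬ S j ∨ ¬ S (i + j)) → ∀ x l, F i j x l = 0)
    (hgen : ∀ T : ℤ → Prop, T 0 → T 1 → T (-1) →
      (∀ i j, T i → T j → (¬ ∀ x l, F i j x l = 0) → T (i + j)) → ∀ k, S k → T k) :
    (∀ k, S k) ∧ ∃ s : ℤ → ℂ, (∀ k, s k ≠ 0) ∧ ∀ m n : ℤ, ∃ B : ℂ, ∀ x l,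
      s m * s n * F m n x l = s (m + n) * (m * x + (m + n) * l + B) := by
  have hneg1 : ∀ l, F 0 (-1) 0 l = -(c * l + d) := by
    intro l
    have := absF_add h h00 (-1) 1 (by
      intro h0
      apply ha
      have e1 := h0 1 0
      have e0 := h0 0 0
      rw [hm] at e1 e0
      linear_combination e1 - e0) l
    rw [show (-1 + 1 : ℤ) = 0 by norm_num, h00, h01] at this
    linear_combination -this
  have hphi : ∀ k, S k → ∀ l, F 0 k 0 l = k * (c * l + d) := by
    apply hgen (fun k => ∀ l, F 0 k 0 l = k * (c * l + d))
    · intro l; rw [h00]; simp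
    · intro l; rw [h01]; simp
    · intro l; rw [hneg1]; push_cast; ring
    · intro i j hi hj hij l
      rw [absF_add h h00 i j hij, hi, hj]; push_cast; ring
  have h2 : Eq2 F := absF_eq2 h h00 hc S hphi hS
  have hone := absF_one h h2 h01 hm
  have hnone := absF_neg_one h h2 (fun x l => by rw [absF_phi h h00, hneg1]) hm
  choose A B hAB using hone
  choose A' B' hAB' using hnone
  have hrec : ∀ k, A k * A' (k + 1) = A (k - 1) * A' k := by
    intro k
    have : A k * A' (k + 1) - A (k - 1) * A' k = 0 := by
      apply aux_quad (a := A k * A' (k + 1) - A (k - 1) * A' k)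
        (b := -A k * B' (k + 1) + B k * A' (k + 1) - A' k * B (k - 1) + B' k * A (k - 1))
        (c := - B k * B' (k + 1) + B' k * B (k - 1) + b * F 0 k 0 0)
      intro x
      have := h.jac (-1) 1 k x 0 0
      rw [add_comm 1 k, show (-1 : ℤ) + 1 = 0 by norm_num, show -1 + k = k - 1 by ring, hm, hAB, hAB,
        hAB', hAB', absF_phi h h00 k] at this
      simp only [add_zero] at this
      linear_combination -this
    linear_combination this
  have hA0 : A 0 = c := by
    have e1 := hAB 0 1 0
    have e0 := hAB 0 0 0
    rw [h.skew, h01] at e1 e0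
    linear_combination e0 - e1
  have hA1 : A' 1 = -a := by
    have e1 := hAB' 1 1 0
    have e0 := hAB' 1 0 0
    rw [hm] at e1 e0
    linear_combination e1 - e0
  have hprod : ∀ k, A k * A' (k + 1) = c * -a := by
    intro k
    induction k using Int.induction_on with
    | zero => rw [hA0, zero_add, hA1]
    | succ n ih => rw [hrec, add_sub_cancel_right]; exact ih
    | pred n ih => rw [hrec] at ih; rw [sub_add_cancel]; exact ih
  have hA : ∀ k, A k ≠ 0 := by
    intro k h0
    have := hprod k
    rw [h0, zero_mul] at this
    exact mul_ne_zero hc (neg_ne_zero.2 ha) this.symm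
  have hSall : ∀ k, S k := by
    intro k
    by_contra hk
    have := hS 1 k (by tauto)
    apply hA k
    have e1 := this 1 0
    have e0 := this 0 0
    rw [hAB] at e1 e0
    linear_combination e1 - e0
  obtain ⟨s, hs, hs1, hstep⟩ := absF_scale A hA
  have hs0 : s 0 * c = 1 := by
    rw [← hs1, show (1 : ℤ) = 0 + 1 by norm_num, hstep, hA0]
  refine ⟨hSall, s, hs, ?_⟩
  set F' : ℤ → ℤ → ℂ → ℂ → ℂ := fun i j x l => s i * s j / s (i + j) * F i j x l with hF'
  have h' : AbsF F' := by
    refine ⟨fun i j => (P2.const _).mul (h.poly i j), ?_, ?_⟩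
    · intro i j k x l m
      have := h.jac i j k x l m
      simp only [hF']
      rw [show j + (i + k) = i + (j + k) by ring, show i + j + k = i + (j + k) by ring]
      have h1 := hs (j + k)
      have h2 := hs (i + (j + k))
      have h3 := hs (i + j)
      have h4 := hs (i + k)
      field_simp
      linear_combination (s i * s j * s k) * this
    · intro i j x l
      simp only [hF']
      rw [h.skew i j, add_comm j i]; ring
  have h2' : Eq2 F' := by
    intro j k x l m
    simp only [hF']
    linear_combination (s j * s k / s (j + k)) * h2 j k x l m
  have key := absF_norm h' h2' (d := s 0 * d) (by
    intro k x l
    simp only [hF']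
    rw [zero_add, absF_phi h h00 k, hphi k (hSall k), mul_div_assoc, div_self (hs k)]
    linear_combination (k * l : ℂ) * hs0) (by
    intro k
    refine ⟨s k / s (k + 1) * B k, fun x l => ?_⟩
    simp only [hF']
    rw [hs1, add_comm 1 k, hAB, hstep]
    have := hs k
    have := hA k
    field_simp)
  intro m n
  obtain ⟨B, hB⟩ := key m n
  refine ⟨B, fun x l => ?_⟩
  rw [← hB]
  simp only [hF']
  have := hs (m + n)
  field_simp

/-! ### The `λ`-bracket at a numerical value of `λ` -/

namespace LieConformalAlgebra

variable {L : Type} [AddCommGroup L] [Module ℂ L]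

def br0 (C : LieConformalAlgebra L) (l : ℂ) (a b : L) : L :=
  ∑ᶠ n : ℕ, (l ^ n / (Nat.factorial n : ℂ)) • C.prd n a b

theorem br0_eq (C : LieConformalAlgebra L) (l : ℂ) (a b : L) (N : ℕ)
    (h : ∀ n, N ≤ n → C.prd n a b = 0) :
    C.br0 l a b = ∑ n ∈ Finset.range N, (l ^ n / (Nat.factorial n : ℂ)) • C.prd n a b := by
  apply finsum_eq_sum_of_support_subset
  intro n hn
  by_contra hc
  apply hn
  simp only [Finset.coe_range, Set.mem_Iio, not_lt] at hc
  simp [h n hc]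

def br (C : LieConformalAlgebra L) (l : ℂ) : L →ₗ[ℂ] L →ₗ[ℂ] L :=
  LinearMap.mk₂ ℂ (C.br0 l)
    (by
      intro a a' b
      obtain ⟨N, hN⟩ := C.bound a b
      obtain ⟨N', hN'⟩ := C.bound a' b
      rw [C.br0_eq l a b (max N N') fun n hn => hN n (le_trans (le_max_left _ _) hn),
        C.br0_eq l a' b (max N N') fun n hn => hN' n (le_trans (le_max_right _ _) hn),
        C.br0_eq l (a + a') b (max N N') fun n hn => by
          rw [map_add, LinearMap.add_apply, hN n (le_trans (le_max_left _ _) hn),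
            hN' n (le_trans (le_max_right _ _) hn), add_zero], ← Finset.sum_add_distrib]
      simp)
    (by
      intro c a b
      obtain ⟨N, hN⟩ := C.bound a b
      rw [C.br0_eq l a b N hN, C.br0_eq l (c • a) b N fun n hn => by simp [hN n hn],
        Finset.smul_sum]
      exact Finset.sum_congr rfl fun n _ => by simp [smul_comm c])
    (by
      intro a b b'
      obtain ⟨N, hN⟩ := C.bound a b
      obtain ⟨N', hN'⟩ := C.bound a b'
      rw [C.br0_eq l a b (max N N') fun n hn => hN n (le_trans (le_max_left _ _) hn),
        C.br0_eq l a b' (max N N') fun n hn => hN' n (le_trans (le_max_right _ _) hn),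
        C.br0_eq l a (b + b') (max N N') fun n hn => by
          rw [map_add, hN n (le_trans (le_max_left _ _) hn),
            hN' n (le_trans (le_max_right _ _) hn), add_zero], ← Finset.sum_add_distrib]
      simp)
    (by
      intro c a b
      obtain ⟨N, hN⟩ := C.bound a b
      rw [C.br0_eq l a b N hN, C.br0_eq l a (c • b) N fun n hn => by simp [hN n hn],
        Finset.smul_sum]
      exact Finset.sum_congr rfl fun n _ => by simp [smul_comm c])

theorem br_eq (C : LieConformalAlgebra L) (l : ℂ) (a b : L) (N : ℕ)
    (h : ∀ n, N ≤ n → C.prd n a b = 0) :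
    C.br l a b = ∑ n ∈ Finset.range N, (l ^ n / (Nat.factorial n : ℂ)) • C.prd n a b :=
  C.br0_eq l a b N h

theorem br_D_left (C : LieConformalAlgebra L) (l : ℂ) (a b : L) :
    C.br l (C.D a) b = (-l) • C.br l a b := by
  obtain ⟨N, hN⟩ := C.bound a b
  rw [C.br_eq l a b N hN, C.br_eq l (C.D a) b (N + 1) fun n hn => by
    rw [C.sesq, hN _ (by omega), smul_zero], Finset.sum_range_succ', Finset.smul_sum]
  rw [C.sesq]
  simp only [Nat.cast_zero, neg_zero, zero_smul, smul_zero, add_zero]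
  refine Finset.sum_congr rfl fun n _ => ?_
  rw [C.sesq, smul_smul, smul_smul, Nat.add_sub_cancel]
  congr 1
  have : (Nat.factorial n : ℂ) ≠ 0 := by exact_mod_cast Nat.factorial_ne_zero n
  have : (n : ℂ) + 1 ≠ 0 := by exact_mod_cast Nat.succ_ne_zero n
  rw [Nat.factorial_succ]
  push_cast
  field_simp
  ring

theorem br_D_right (C : LieConformalAlgebra L) (l : ℂ) (a b : L) :
    C.br l a (C.D b) = C.D (C.br l a b) + l • C.br l a b := by
  obtain ⟨N, hN⟩ := C.bound a b
  rw [C.br_eq l a (C.D b) (N + 1) fun n hn => by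
    rw [C.sesq', hN _ (by omega), hN _ (by omega), smul_zero, map_zero, add_zero]]
  simp only [C.sesq', smul_add, Finset.sum_add_distrib]
  congr 1
  · rw [C.br_eq l a b (N + 1) fun n hn => hN n (by omega), map_sum]
    simp
  · rw [C.br_eq l a b N hN, Finset.sum_range_succ', Finset.smul_sum]
    simp only [Nat.cast_zero, zero_smul, smul_zero, add_zero]
    refine Finset.sum_congr rfl fun n _ => ?_
    rw [smul_smul, smul_smul, Nat.add_sub_cancel]
    congr 1
    have : (Nat.factorial n : ℂ) ≠ 0 := by exact_mod_cast Nat.factorial_ne_zero n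
    have : (n : ℂ) + 1 ≠ 0 := by exact_mod_cast Nat.succ_ne_zero n
    rw [Nat.factorial_succ]
    push_cast
    field_simp
    ring

theorem br_aeval_left (C : LieConformalAlgebra L) (l : ℂ) (a b : L) (q : ℂ[X]) :
    C.br l (aeval C.D q a) b = q.eval (-l) • C.br l a b := by
  induction q using Polynomial.induction_on' with
  | add p q hp hq => simp [hp, hq, add_smul]
  | monomial n c =>
    rw [aeval_monomial, Module.End.mul_apply, Module.algebraMap_end_apply, map_smul,
      LinearMap.smul_apply, eval_monomial, mul_smul]
    congr 1
    induction n with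
    | zero => simp
    | succ n ih => rw [pow_succ', Module.End.mul_apply, br_D_left, ih, smul_smul, pow_succ']

theorem br_aeval_right (C : LieConformalAlgebra L) (l : ℂ) (a b : L) (q : ℂ[X]) :
    C.br l a (aeval C.D q b) = aeval C.D (q.comp (X + Polynomial.C l)) (C.br l a b) := by
  induction q using Polynomial.induction_on' with
  | add p q hp hq => simp [hp, hq]
  | monomial n c =>
    rw [aeval_monomial, Module.End.mul_apply, Module.algebraMap_end_apply, map_smul,
      monomial_comp, map_mul, Module.End.mul_apply, aeval_C, Module.algebraMap_end_apply]
    congr 1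
    induction n with
    | zero => simp
    | succ n ih =>
      rw [pow_succ', Module.End.mul_apply, br_D_right, ih, pow_succ', map_mul,
        Module.End.mul_apply]
      simp

theorem unif_bound (C : LieConformalAlgebra L) (g h : ℕ → L) (J : ℕ) :
    ∃ K, ∀ j < J, ∀ k, K ≤ k → C.prd k (g j) (h j) = 0 := by
  choose N hN using fun j => C.bound (g j) (h j)
  refine ⟨(Finset.range J).sup N, fun j hj k hk => hN j k (le_trans ?_ hk)⟩
  exact Finset.le_sup (f := N) (Finset.mem_range.2 hj)

theorem sum_square (N : ℕ) (f : ℕ → ℕ → L) (hf : ∀ j r, N ≤ j + r → f j r = 0) :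
    ∑ m ∈ Finset.range N, ∑ j ∈ Finset.range (m + 1), f j (m - j)
      = ∑ j ∈ Finset.range N, ∑ r ∈ Finset.range N, f j r := by
  rw [Finset.sum_range_diag_flip]
  refine Finset.sum_congr rfl fun j _ => ?_
  apply Finset.sum_subset
  · intro r hr
    simp only [Finset.mem_range] at *
    omega
  · intro r _ hr
    apply hf
    simp only [Finset.mem_range] at *
    omega

theorem sum_exp (N : ℕ) (l m : ℂ) (Y : ℕ → L) (hY : ∀ k, N ≤ k → Y k = 0) :
    ∑ r ∈ Finset.range N, ∑ n ∈ Finset.range N,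
      ((l ^ r / (Nat.factorial r : ℂ)) * (m ^ n / (Nat.factorial n : ℂ))) • Y (r + n)
    = ∑ k ∈ Finset.range N, ((l + m) ^ k / (Nat.factorial k : ℂ)) • Y k := by
  rw [← sum_square N (fun r n =>
    ((l ^ r / (Nat.factorial r : ℂ)) * (m ^ n / (Nat.factorial n : ℂ))) • Y (r + n))
    (fun r n h => by rw [hY _ h, smul_zero])]
  refine Finset.sum_congr rfl fun k _ => ?_
  rw [add_pow, Finset.sum_div, Finset.sum_smul]
  refine Finset.sum_congr rfl fun r hr => ?_
  have hr' : r ≤ k := by simp only [Finset.mem_range] at hr; omega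
  rw [Nat.add_sub_cancel' hr']
  congr 1
  rw [Nat.cast_choose ℂ hr']
  have h1 : (Nat.factorial k : ℂ) ≠ 0 := by exact_mod_cast Nat.factorial_ne_zero k
  have h2 : (Nat.factorial r : ℂ) ≠ 0 := by exact_mod_cast Nat.factorial_ne_zero r
  have h3 : (Nat.factorial (k - r) : ℂ) ≠ 0 := by exact_mod_cast Nat.factorial_ne_zero _
  field_simp

theorem br_jacobi (C : LieConformalAlgebra L) (l m : ℂ) (a b c : L) :
    C.br l a (C.br m b c) = C.br (l + m) (C.br l a b) c + C.br m b (C.br l a c) := by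
  obtain ⟨N1, h1⟩ := C.bound b c
  obtain ⟨N2, h2⟩ := C.bound a c
  obtain ⟨J, h3⟩ := C.bound a b
  obtain ⟨K1, g1⟩ := C.unif_bound (fun _ => a) (fun j => C.prd j b c) N1
  obtain ⟨K2, g2⟩ := C.unif_bound (fun _ => b) (fun j => C.prd j a c) N2
  obtain ⟨K, g3⟩ := C.unif_bound (fun j => C.prd j a b) (fun _ => c) J
  obtain ⟨N, hN1, hN2, hN3, hN4, hN5⟩ : ∃ N, N1 ≤ N ∧ N2 ≤ N ∧ K1 ≤ N ∧ K2 ≤ N ∧ J + K ≤ N :=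
    ⟨N1 + N2 + K1 + K2 + (J + K), by omega, by omega, by omega, by omega, by omega⟩
  have g1' : ∀ j k, N ≤ k → C.prd k a (C.prd j b c) = 0 := by
    intro j k hk
    by_cases hj : j < N1
    · exact g1 j hj k (by omega)
    · rw [h1 j (by omega), map_zero]
  have g2' : ∀ j k, N ≤ k → C.prd k b (C.prd j a c) = 0 := by
    intro j k hk
    by_cases hj : j < N2
    · exact g2 j hj k (by omega)
    · rw [h2 j (by omega), map_zero]
  have g3' : ∀ j k, K ≤ k → C.prd k (C.prd j a b) c = 0 := by
    intro j k hk
    by_cases hj : j < J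
    · exact g3 j hj k (by omega)
    · rw [h3 j (by omega), map_zero, LinearMap.zero_apply]
  have E1 : C.br l a (C.br m b c) = ∑ i ∈ Finset.range N, ∑ j ∈ Finset.range N,
      ((l ^ i / (Nat.factorial i : ℂ)) * (m ^ j / (Nat.factorial j : ℂ))) •
        C.prd i a (C.prd j b c) := by
    rw [C.br_eq m b c N fun n hn => h1 n (by omega), map_sum, Finset.sum_comm]
    refine Finset.sum_congr rfl fun j _ => ?_
    rw [map_smul, C.br_eq l a _ N (g1' j), Finset.smul_sum]
    refine Finset.sum_congr rfl fun i _ => ?_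
    rw [smul_smul, mul_comm]
  have E2 : C.br m b (C.br l a c) = ∑ i ∈ Finset.range N, ∑ j ∈ Finset.range N,
      ((l ^ i / (Nat.factorial i : ℂ)) * (m ^ j / (Nat.factorial j : ℂ))) •
        C.prd j b (C.prd i a c) := by
    rw [C.br_eq l a c N fun n hn => h2 n (by omega), map_sum]
    refine Finset.sum_congr rfl fun j _ => ?_
    rw [map_smul, C.br_eq m b _ N (g2' j), Finset.smul_sum]
    refine Finset.sum_congr rfl fun i _ => ?_
    rw [smul_smul]
  have E3 : C.br (l + m) (C.br l a b) c = ∑ j ∈ Finset.range N, ∑ r ∈ Finset.range N,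
      ∑ n ∈ Finset.range N, ((l ^ j / (Nat.factorial j : ℂ)) * ((l ^ r / (Nat.factorial r : ℂ)) *
        (m ^ n / (Nat.factorial n : ℂ)))) • C.prd (r + n) (C.prd j a b) c := by
    rw [C.br_eq l a b N fun n hn => h3 n (by omega), map_sum, LinearMap.sum_apply]
    refine Finset.sum_congr rfl fun j _ => ?_
    rw [map_smul, LinearMap.smul_apply, C.br_eq (l + m) _ c N fun k hk => g3' j k (by omega),
      ← sum_exp N l m _ fun k hk => g3' j k (by omega), Finset.smul_sum]
    refine Finset.sum_congr rfl fun r _ => ?_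
    rw [Finset.smul_sum]
    refine Finset.sum_congr rfl fun n _ => ?_
    rw [smul_smul]
  rw [← sub_eq_iff_eq_add, E1, E2, E3, ← Finset.sum_sub_distrib,
    ← sum_square N (fun j r => ∑ n ∈ Finset.range N, ((l ^ j / (Nat.factorial j : ℂ)) *
      ((l ^ r / (Nat.factorial r : ℂ)) *
        (m ^ n / (Nat.factorial n : ℂ)))) • C.prd (r + n) (C.prd j a b) c)]
  · refine Finset.sum_congr rfl fun i _ => ?_
    rw [← Finset.sum_sub_distrib, Finset.sum_comm]
    refine Finset.sum_congr rfl fun n _ => ?_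
    rw [← smul_sub, C.jacobi, Finset.smul_sum]
    refine Finset.sum_congr rfl fun j hj => ?_
    have hj' : j ≤ i := by simp only [Finset.mem_range] at hj; omega
    rw [smul_smul, show i + n - j = i - j + n by omega]
    congr 1
    rw [Nat.cast_choose ℂ hj']
    have h1 : (Nat.factorial i : ℂ) ≠ 0 := by exact_mod_cast Nat.factorial_ne_zero i
    have h2 : (Nat.factorial j : ℂ) ≠ 0 := by exact_mod_cast Nat.factorial_ne_zero j
    have h3 : (Nat.factorial (i - j) : ℂ) ≠ 0 := by exact_mod_cast Nat.factorial_ne_zero _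
    have h4 : (Nat.factorial n : ℂ) ≠ 0 := by exact_mod_cast Nat.factorial_ne_zero _
    obtain ⟨r, rfl⟩ := Nat.exists_eq_add_of_le hj'
    rw [Nat.add_sub_cancel_left] at *
    field_simp
    ring
  · intro j r hjr
    apply Finset.sum_eq_zero
    intro n _
    by_cases hj : j < J
    · rw [g3' j _ (by omega), smul_zero]
    · rw [h3 j (by omega), map_zero, LinearMap.zero_apply, smul_zero]

/-- skew symmetry at a numerical value -/
theorem br_skew (C : LieConformalAlgebra L) (l : ℂ) (a b : L) (N : ℕ)
    (hN : ∀ n, N ≤ n → C.prd n b a = 0) :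
    C.br l a b = - ∑ k ∈ Finset.range N, (Nat.factorial k : ℂ)⁻¹ •
      aeval C.D ((- Polynomial.C l - X : ℂ[X]) ^ k) (C.prd k b a) := by
  have hs : ∀ n, C.prd n a b = - ∑ j ∈ Finset.range N,
      ((-1 : ℂ) ^ (n + j) * ((Nat.factorial j : ℂ))⁻¹) • (C.D ^ j) (C.prd (n + j) b a) := by
    intro n
    rw [C.skew, finsum_eq_sum_of_support_subset (s := Finset.range N)]
    · simp only [Module.End.pow_apply]
    · intro j hj
      by_contra hc
      apply hj
      simp only [Finset.coe_range, Set.mem_Iio, not_lt] at hc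
      have : C.prd (n + j) b a = 0 := hN _ (by omega)
      simp only
      rw [this, ← Module.End.pow_apply, map_zero, smul_zero]
  rw [C.br_eq l a b N fun n hn => by
    rw [hs, neg_eq_zero]
    apply Finset.sum_eq_zero
    intro j _
    rw [hN _ (by omega), map_zero, smul_zero]]
  simp only [hs, smul_neg, Finset.sum_neg_distrib]
  congr 1
  simp only [Finset.smul_sum, smul_smul]
  rw [← sum_square N (fun n j => (l ^ n / (Nat.factorial n : ℂ) *
    ((-1 : ℂ) ^ (n + j) * ((Nat.factorial j : ℂ))⁻¹)) • (C.D ^ j) (C.prd (n + j) b a))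
    (fun n j h => by rw [hN _ h, map_zero, smul_zero])]
  refine Finset.sum_congr rfl fun k _ => ?_
  rw [show (- Polynomial.C l - X : ℂ[X]) = Polynomial.C (-1) * (Polynomial.C l + X) by
    rw [map_neg, map_one]; ring, mul_pow, add_pow, Finset.mul_sum, map_sum, LinearMap.sum_apply,
    Finset.smul_sum]
  refine Finset.sum_congr rfl fun r hr => ?_
  have hr' : r ≤ k := by simp only [Finset.mem_range] at hr; omega
  rw [Nat.add_sub_cancel' hr']
  rw [show Polynomial.C (-1 : ℂ) ^ k * (Polynomial.C l ^ r * X ^ (k - r) * (k.choose r : ℂ[X]))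
    = Polynomial.C ((-1) ^ k * l ^ r * (k.choose r : ℂ)) * X ^ (k - r) by
      simp only [map_mul, map_pow, map_natCast]; ring]
  rw [map_mul, Module.End.mul_apply, aeval_C, Module.algebraMap_end_apply, map_pow, aeval_X,
    smul_smul]
  congr 1
  rw [Nat.cast_choose ℂ hr']
  have h1 : (Nat.factorial k : ℂ) ≠ 0 := by exact_mod_cast Nat.factorial_ne_zero k
  have h2 : (Nat.factorial r : ℂ) ≠ 0 := by exact_mod_cast Nat.factorial_ne_zero r
  have h3 : (Nat.factorial (k - r) : ℂ) ≠ 0 := by exact_mod_cast Nat.factorial_ne_zero _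
  field_simp

theorem applyP_eq (C : LieConformalAlgebra L) (q : ℂ[X]) (x : L) :
    C.applyP q x = aeval C.D q x := by
  rw [applyP, aeval_eq_sum_range, LinearMap.sum_apply, Polynomial.sum_over_range]
  · simp [Module.End.pow_apply]
  · simp

end LieConformalAlgebra

/-! ### From graded algebras to structure functions -/

theorem evalEval_aux (p : ℂ[X][X]) (q : ℂ[X]) (x : ℂ) :
    (p.eval q).eval x = p.evalEval x (q.eval x) := by
  induction p using Polynomial.induction_on' with
  | add p r hp hr => simp [hp, hr]
  | monomial n c => simp [evalEval]

namespace RankOneContext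

variable {L : Type} [AddCommGroup L] [Module ℂ L]

theorem prd_bas (C : RankOneContext L) (i j : ℤ) (n : ℕ) :
    C.prd n (C.bas i) (C.bas j)
      = (Nat.factorial n : ℂ) • aeval C.D ((C.sp i j).coeff n) (C.bas (i + j)) := by
  rw [C.sp_brkt, ← LieConformalAlgebra.applyP_eq]
  rfl

theorem prd_bas_zero (C : RankOneContext L) (i j : ℤ) (n : ℕ)
    (hn : (C.sp i j).natDegree + 1 ≤ n) : C.prd n (C.bas i) (C.bas j) = 0 := by
  rw [prd_bas, coeff_eq_zero_of_natDegree_lt (by omega)]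
  simp

theorem br_bas (C : RankOneContext L) (i j : ℤ) (l : ℂ) :
    C.toLieConformalAlgebra.br l (C.bas i) (C.bas j)
      = aeval C.D ((C.sp i j).eval (Polynomial.C l)) (C.bas (i + j)) := by
  rw [LieConformalAlgebra.br_eq _ _ _ _ ((C.sp i j).natDegree + 1)
    (fun n hn => C.prd_bas_zero i j n hn), eval_eq_sum_range, map_sum, LinearMap.sum_apply]
  refine Finset.sum_congr rfl fun n _ => ?_
  have h2 : (Nat.factorial n : ℂ) ≠ 0 := by exact_mod_cast Nat.factorial_ne_zero n
  rw [prd_bas, smul_smul, div_mul_cancel₀ _ h2, ← C_pow, mul_comm, map_mul,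
    Module.End.mul_apply, aeval_C, Module.algebraMap_end_apply]

theorem aeval_eq_zero (C : RankOneContext L) (i : ℤ) (hi : C.G i ≠ ⊥) (r : ℂ[X])
    (h : aeval C.D r (C.bas i) = 0) : r = 0 := by
  rw [aeval_eq_sum_range, LinearMap.sum_apply] at h
  have h' := linearIndependent_iff'.1 (C.bas_indep i hi) (Finset.range (r.natDegree + 1)) r.coeff
    (by simpa [Module.End.pow_apply] using h)
  ext k
  by_cases hk : k ≤ r.natDegree
  · exact h' k (Finset.mem_range.2 (by omega))
  · exact coeff_eq_zero_of_natDegree_lt (by omega)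

theorem aeval_inj (C : RankOneContext L) (i : ℤ) (hi : C.G i ≠ ⊥) (p q : ℂ[X])
    (h : aeval C.D p (C.bas i) = aeval C.D q (C.bas i)) : p = q := by
  rw [← sub_eq_zero]
  apply C.aeval_eq_zero i hi
  rw [map_sub, LinearMap.sub_apply, h, sub_self]

def FF (C : RankOneContext L) (i j : ℤ) (x l : ℂ) : ℂ := (C.sp i j).evalEval x l

theorem FF_def (C : RankOneContext L) (i j : ℤ) (x l : ℂ) :
    C.FF i j x l = ((C.sp i j).eval (Polynomial.C l)).eval x := rfl

theorem FF_zero (C : RankOneContext L) (i j : ℤ)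
    (h : C.G i = ⊥ ∨ C.G j = ⊥ ∨ C.G (i + j) = ⊥) (x l : ℂ) : C.FF i j x l = 0 := by
  rw [FF_def, C.sp_zero i j h]
  simp

theorem FF_skew (C : RankOneContext L) (i j : ℤ) (x l : ℂ) :
    C.FF i j x l = - C.FF j i x (-l - x) := by
  by_cases hG : C.G (i + j) = ⊥
  · rw [C.FF_zero i j (by tauto), C.FF_zero j i (by rw [add_comm j i]; tauto), neg_zero]
  have h := LieConformalAlgebra.br_skew C.toLieConformalAlgebra l (C.bas i) (C.bas j) _
    (fun n hn => C.prd_bas_zero j i n hn)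
  rw [br_bas] at h
  have h2 : ∑ k ∈ Finset.range ((C.sp j i).natDegree + 1), (Nat.factorial k : ℂ)⁻¹ •
      aeval C.D ((- Polynomial.C l - X : ℂ[X]) ^ k) (C.prd k (C.bas j) (C.bas i))
      = aeval C.D ((C.sp j i).eval (- Polynomial.C l - X)) (C.bas (i + j)) := by
    rw [eval_eq_sum_range, map_sum, LinearMap.sum_apply]
    refine Finset.sum_congr rfl fun n _ => ?_
    have h2 : (Nat.factorial n : ℂ) ≠ 0 := by exact_mod_cast Nat.factorial_ne_zero n
    rw [prd_bas, map_smul, smul_smul, inv_mul_cancel₀ h2, one_smul, mul_comm, map_mul,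
      Module.End.mul_apply, add_comm j i]
  rw [h2, ← LinearMap.neg_apply, ← map_neg] at h
  have h3 := congrArg (eval x) (C.aeval_inj _ hG _ _ h)
  rw [eval_neg, evalEval_aux, evalEval_aux] at h3
  simpa [FF] using h3

theorem FF_jac (C : RankOneContext L) (i j k : ℤ) (x l m : ℂ) :
    C.FF j k (x + l) m * C.FF i (j + k) x l
      = C.FF i j (-l - m) l * C.FF (i + j) k x (l + m)
        + C.FF i k (x + m) l * C.FF j (i + k) x m := by
  have e1 : i + j + k = i + (j + k) := by ring
  have e2 : j + (i + k) = i + (j + k) := by ring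
  by_cases hG : C.G (i + (j + k)) = ⊥
  · rw [C.FF_zero i (j + k) (by tauto), C.FF_zero (i + j) k (by rw [e1]; tauto),
      C.FF_zero j (i + k) (by rw [e2]; tauto)]
    simp
  have h := LieConformalAlgebra.br_jacobi C.toLieConformalAlgebra l m (C.bas i) (C.bas j) (C.bas k)
  simp only [br_bas, LieConformalAlgebra.br_aeval_left, LieConformalAlgebra.br_aeval_right, e1, e2]
    at h
  simp only [← Module.End.mul_apply, ← map_mul, ← LinearMap.smul_apply] at h
  rw [← map_smul, ← LinearMap.add_apply, ← map_add] at h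
  have h3 := congrArg (eval x) (C.aeval_inj _ hG _ _ h)
  simp only [eval_add, eval_mul, eval_smul, eval_comp, eval_X, eval_C, smul_eq_mul] at h3
  simp only [FF_def]
  rw [h3, show -l - m = -(l + m) by ring, C_add]

theorem FF_abs (C : RankOneContext L) : AbsF C.FF where
  poly := fun i j => ⟨C.sp i j, fun _ _ => rfl⟩
  jac := C.FF_jac
  skew := C.FF_skew

theorem FF_00 (C : RankOneContext L) (x l : ℂ) : C.FF 0 0 x l = 0 := by
  have h := C.br_bas 0 0 l
  rw [LieConformalAlgebra.br_eq _ _ _ _ 0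
    (fun n _ => C.abelian0 n _ (C.bas_mem 0) _ (C.bas_mem 0))] at h
  simp only [Finset.range_zero, Finset.sum_empty] at h
  rw [FF_def, C.aeval_eq_zero (0 + 0) (by simpa using C.supp_zero) _ h.symm, eval_zero]

theorem D_iter_mem (C : RankOneContext L) (i : ℤ) (k : ℕ) : (⇑C.D)^[k] (C.bas i) ∈ C.G i := by
  induction k with
  | zero => exact C.bas_mem i
  | succ k ih =>
    rw [Function.iterate_succ_apply']
    exact C.dGrade _ _ ih

theorem prd_zero_of_sp (C : RankOneContext L) (i j : ℤ) (h : C.sp i j = 0) (n : ℕ) (a b : L)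
    (ha : a ∈ C.G i) (hb : b ∈ C.G j) : C.prd n a b = 0 := by
  by_cases hi : C.G i = ⊥
  · rw [hi, Submodule.mem_bot] at ha
    simp [ha]
  by_cases hj : C.G j = ⊥
  · rw [hj, Submodule.mem_bot] at hb
    simp [hb]
  have h0 : ∀ n, C.prd n (C.bas i) (C.bas j) = 0 := by
    intro n
    rw [prd_bas, h]
    simp
  have h1 : ∀ k n, C.prd n ((⇑C.D)^[k] (C.bas i)) (C.bas j) = 0 := by
    intro k
    induction k with
    | zero => exact h0
    | succ k ih =>
      intro n
      rw [Function.iterate_succ_apply', C.sesq, ih, smul_zero]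
  have h2 : ∀ k' k n, C.prd n ((⇑C.D)^[k] (C.bas i)) ((⇑C.D)^[k'] (C.bas j)) = 0 := by
    intro k'
    induction k' with
    | zero => exact h1
    | succ k' ih =>
      intro k n
      rw [Function.iterate_succ_apply', C.sesq', ih, ih, smul_zero, map_zero, add_zero]
  rw [C.bas_span i hi] at ha
  rw [C.bas_span j hj] at hb
  induction ha using Submodule.span_induction with
  | mem a ha =>
    obtain ⟨k, rfl⟩ := ha
    induction hb using Submodule.span_induction with
    | mem b hb => obtain ⟨k', rfl⟩ := hb; exact h2 k' k n
    | zero => simp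
    | add u v _ _ hu hv => rw [map_add, hu, hv, add_zero]
    | smul c u _ hu => rw [map_smul, hu, smul_zero]
  | zero => simp
  | add u v _ _ hu hv => rw [map_add, LinearMap.add_apply, hu, hv, add_zero]
  | smul c u _ hu => rw [map_smul, LinearMap.smul_apply, hu, smul_zero]

end RankOneContext

namespace ClassV

variable {L : Type} [AddCommGroup L] [Module ℂ L]

theorem gen_aux (C : ClassV L) (T : ℤ → Prop) (T0 : T 0) (T1 : T 1) (T2 : T (-1))
    (hT : ∀ i j, T i → T j → (¬ ∀ x l, C.FF i j x l = 0) → T (i + j)) (k : ℤ)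
    (hk : C.G k ≠ ⊥) : T k := by
  have hle : ∀ i, T i → C.G i ≤ ⨆ i : {i : ℤ // T i}, C.G i.1 := fun i hi =>
    le_iSup (fun i : {i : ℤ // T i} => C.G i.1) ⟨i, hi⟩
  have key := C.genV (⨆ i : {i : ℤ // T i}, C.G i.1) ?_ ?_ (hle _ T1) (hle _ T0) (hle _ T2)
  · by_contra hTk
    apply hk
    have hd := C.internal.submodule_iSupIndep k
    have h1 : (⨆ i : {i : ℤ // T i}, C.G i.1) ≤ ⨆ j, ⨆ (_ : j ≠ k), C.G j := by
      refine iSup_le fun i => ?_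
      have : i.1 ≠ k := fun h => hTk (h ▸ i.2)
      exact le_iSup₂_of_le i.1 this le_rfl
    rw [key, top_le_iff] at h1
    rw [h1] at hd
    exact disjoint_top.1 hd
  · intro x hx
    induction hx using Submodule.iSup_induction' with
    | mem i x hx => exact hle _ i.2 (C.dGrade _ _ hx)
    | zero => simp
    | add u v _ _ hu hv => rw [map_add]; exact add_mem hu hv
  · intro n a ha b hb
    induction ha using Submodule.iSup_induction' with
    | mem i a ha =>
      induction hb using Submodule.iSup_induction' with
      | mem j b hb =>
        by_cases hF : ∀ x l, C.FF i.1 j.1 x l = 0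
        · rw [C.prd_zero_of_sp i.1 j.1 (aux_evalEval_zero _ hF) n a b ha hb]
          exact zero_mem _
        · exact hle _ (hT _ _ i.2 j.2 hF) (C.prdGrade _ _ n a ha b hb)
      | zero => simp
      | add u v _ _ hu hv => rw [map_add]; exact add_mem hu hv
    | zero => simp
    | add u v _ _ hu hv => rw [map_add, LinearMap.add_apply]; exact add_mem hu hv

end ClassV
/-- for a class `𝒱` algebra with `deg p_{-1,1}(∂) = 1` and
`deg p_{0,1}(λ) = 1`, `Supp(L) = ℤ` and the bases may be rechosen so that the
degree-one part of each `p_{m,n}` is `m∂ + (m+n)λ`. -/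
theorem classV_deg_one_one_normal_form
    {L : Type} [AddCommGroup L] [Module ℂ L] (C : ClassV L)
    (hmem₁ : (C.sp (-1) 1).natDegree = 0)
    (hmem₀ : ∀ n : ℕ, ((C.sp 0 1).coeff n).natDegree = 0)
    (hdeg₁ : ((C.sp (-1) 1).coeff 0).natDegree = 1)
    (hdeg₀ : (C.sp 0 1).natDegree = 1) :
    (∀ i : ℤ, C.G i ≠ ⊥) ∧
    ∃ (v : ℤ → L) (q : ℤ → ℤ → Polynomial (Polynomial ℂ)),
      (∀ i : ℤ, v i ∈ C.G i) ∧
      (∀ i : ℤ, LinearIndependent ℂ fun k : ℕ => (⇑C.D)^[k] (v i)) ∧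
      (∀ i : ℤ, C.G i = Submodule.span ℂ (Set.range fun k : ℕ => (⇑C.D)^[k] (v i))) ∧
      (∀ i j : ℤ, C.toLieConformalAlgebra.BracketEq (v i) (v j) (v (i + j)) (q i j)) ∧
      (∀ m n : ℤ, ∃ d : ℂ,
        q m n = Pc (m : ℂ) * Pd + Pc ((m : ℂ) + (n : ℂ)) * Pl + Pc d) := by
  have h00 := C.toRankOneContext.FF_00
  obtain ⟨a, b, ha, hm⟩ : ∃ a b : ℂ, a ≠ 0 ∧ ∀ x l, C.FF (-1) 1 x l = a * x + b := by
    refine ⟨((C.sp (-1) 1).coeff 0).coeff 1, ((C.sp (-1) 1).coeff 0).coeff 0, ?_, ?_⟩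
    · rw [← hdeg₁]
      intro h
      rw [coeff_natDegree, leadingCoeff_eq_zero] at h
      simp [h] at hdeg₁
    · intro x l
      rw [RankOneContext.FF_def, eq_C_of_natDegree_eq_zero hmem₁, eval_C, coeff_C_zero]
      conv_lhs => rw [eq_X_add_C_of_natDegree_le_one hdeg₁.le]
      simp
  obtain ⟨c, d, hc, h01⟩ : ∃ c d : ℂ, c ≠ 0 ∧ ∀ x l, C.FF 0 1 x l = c * l + d := by
    refine ⟨((C.sp 0 1).coeff 1).coeff 0, ((C.sp 0 1).coeff 0).coeff 0, ?_, ?_⟩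
    · intro h
      have h1 : (C.sp 0 1).coeff 1 = 0 := by
        rw [eq_C_of_natDegree_eq_zero (hmem₀ 1), h, C_0]
      rw [← hdeg₀, coeff_natDegree, leadingCoeff_eq_zero] at h1
      simp [h1] at hdeg₀
    · intro x l
      rw [RankOneContext.FF_def]
      conv_lhs => rw [eq_X_add_C_of_natDegree_le_one hdeg₀.le]
      rw [eq_C_of_natDegree_eq_zero (hmem₀ 1), eq_C_of_natDegree_eq_zero (hmem₀ 0)]
      simp
  obtain ⟨hSall, s, hs, hB⟩ := absF_main C.toRankOneContext.FF_abs h00 ha hc h01 hm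
    (fun k => C.G k ≠ ⊥)
    (fun i j h => C.toRankOneContext.FF_zero i j (by simpa using h))
    (fun T T0 T1 T2 hT k hk => C.gen_aux T T0 T1 T2 hT k hk)
  refine ⟨hSall, ?_⟩
  choose B hB using hB
  have hv : ∀ i (k : ℕ), (⇑C.D)^[k] (s i • C.bas i) = s i • (⇑C.D)^[k] (C.bas i) := by
    intro i k
    rw [← Module.End.pow_apply, map_smul, Module.End.pow_apply]
  refine ⟨fun i => s i • C.bas i,
    fun m n => Pc (m : ℂ) * Pd + Pc ((m : ℂ) + (n : ℂ)) * Pl + Pc (B m n),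
    fun i => Submodule.smul_mem _ _ (C.bas_mem i), ?_, ?_, ?_, fun m n => ⟨B m n, rfl⟩⟩
  · intro i
    simp only [hv]
    exact (C.bas_indep i (hSall i)).units_smul (fun _ => Units.mk0 (s i) (hs i))
  · intro i
    rw [C.bas_span i (hSall i)]
    simp only [hv]
    apply le_antisymm
    · rw [Submodule.span_le]
      rintro _ ⟨k, rfl⟩
      have h1 : (s i)⁻¹ • (s i • (⇑C.D)^[k] (C.bas i)) ∈
          Submodule.span ℂ (Set.range fun k : ℕ => s i • (⇑C.D)^[k] (C.bas i)) :=
        Submodule.smul_mem _ _ (Submodule.subset_span ⟨k, rfl⟩)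
      rw [smul_smul, inv_mul_cancel₀ (hs i), one_smul] at h1
      exact h1
    · rw [Submodule.span_le]
      rintro _ ⟨k, rfl⟩
      exact Submodule.smul_mem _ _ (Submodule.subset_span ⟨k, rfl⟩)
  · intro m n N
    have hp : Polynomial.C (Polynomial.C (s m * s n)) * C.sp m n
        = Polynomial.C (Polynomial.C (s (m + n))) *
          (Pc (m : ℂ) * Pd + Pc ((m : ℂ) + (n : ℂ)) * Pl + Pc (B m n)) := by
      rw [← sub_eq_zero]
      apply aux_evalEval_zero
      intro x y
      have := hB m n x y
      rw [RankOneContext.FF] at this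
      simp only [evalEval_sub, evalEval_mul, evalEval_add, Pc, Pd, Pl, evalEval_C, evalEval_X,
        eval_C, eval_X]
      rw [this]
      ring
    have hN := congrArg (fun p => p.coeff N) hp
    simp only [coeff_C_mul] at hN
    rw [LieConformalAlgebra.applyP_eq, map_smul, map_smul, LinearMap.smul_apply,
      RankOneContext.prd_bas, map_smul]
    have h2 := congrArg (fun r => aeval C.D r (C.bas (m + n))) hN
    simp only [map_mul, Module.End.mul_apply, aeval_C, Module.algebraMap_end_apply] at h2
    rw [← h2]
    simp only [smul_smul]
    congr 1
    ring
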